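/- Fix integers d ≥ 2 and m ≥ 1 and a unit vector ψ ∈ ℂ^m ⊗ ℂ^d. Consider bipartite single-call probabilistic protocols (S, S_ch), together with p ∈ ℝ, satisfying S ⋆ U = p · (1_m ⊗ U̅)|ψ⟩⟨ψ|(1_m ⊗ U̅)† for all U ∈ SU(d) (exact probabilistic unitary complex conjugation on one part of the known bipartite pure state ψ). If d > 2, then every such protocol has p = 0. If d = 2, then there exists such a protocol with p = 1; hence the maximal success probability equals 1 for d = 2 and 0 for d > 2. -/

import Mathlib

open Matrix Kronecker BigOperators ComplexOrder

noncomputable section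

/-- Entrywise complex conjugate `U̅` of a matrix. -/
def mconj {d : ℕ} (U : Matrix (Fin d) (Fin d) ℂ) : Matrix (Fin d) (Fin d) ℂ :=
  U.map (starRingEnd ℂ)

/-- Rank-one outer product `|v⟩⟨v|`. -/
def outer {n : Type*} (v : n → ℂ) : Matrix n n ℂ :=
  Matrix.vecMulVec v (star v)

/-- Choi vector `|U⟩⟩ = Σ_i e_i ⊗ U e_i`. -/
def choiVec {d : ℕ} (U : Matrix (Fin d) (Fin d) ℂ) : Fin d × Fin d → ℂ :=
  fun p => U p.2 p.1

/-- `|U⟩⟩⟨⟨U|`. -/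
def choiProj {d : ℕ} (U : Matrix (Fin d) (Fin d) ℂ) :
    Matrix (Fin d × Fin d) (Fin d × Fin d) ℂ :=
  outer (choiVec U)

/-- Partial trace over the first tensor factor. -/
def ptrLeft {α β : Type*} [Fintype α] (S : Matrix (α × β) (α × β) ℂ) :
    Matrix β β ℂ :=
  fun b b' => ∑ a, S (a, b) (a, b')

/-- Partial trace over the second (last) tensor factor. -/
def ptrRight {α β : Type*} [Fintype β] (S : Matrix (α × β) (α × β) ℂ) :
    Matrix α α ℂ :=
  fun a a' => ∑ b, S (a, b) (a', b)

/-- Action `S ⋆ U := Tr_{IO}[ S · (|U̅⟩⟩⟨⟨U̅|_{IO} ⊗ 1_{AF}) ]` of a bipartite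
single-call supermap `S` on `I ⊗ O ⊗ A ⊗ F`, applied to the unitary channel `U`. -/
def actB {d m : ℕ}
    (S : Matrix ((Fin d × Fin d) × (Fin m × Fin d)) ((Fin d × Fin d) × (Fin m × Fin d)) ℂ)
    (U : Matrix (Fin d) (Fin d) ℂ) : Matrix (Fin m × Fin d) (Fin m × Fin d) ℂ :=
  ptrLeft (S * (choiProj (mconj U) ⊗ₖ (1 : Matrix (Fin m × Fin d) (Fin m × Fin d) ℂ)))

/-- A bipartite single-call probabilistic protocol (auxiliary output dimension `m`):
`0 ≤ S ≤ S_ch` with `Tr_{AF}(S_ch) = σ ⊗ 1_d`, `σ ≥ 0`, `Tr σ = 1`. -/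
def IsProtocolB {d m : ℕ}
    (S Sch : Matrix ((Fin d × Fin d) × (Fin m × Fin d)) ((Fin d × Fin d) × (Fin m × Fin d)) ℂ) :
    Prop :=
  S.PosSemidef ∧ (Sch - S).PosSemidef ∧
    ∃ σ : Matrix (Fin d) (Fin d) ℂ, σ.PosSemidef ∧ σ.trace = 1 ∧
      ptrRight Sch = σ ⊗ₖ (1 : Matrix (Fin d) (Fin d) ℂ)

/-- Largest eigenvalue of a matrix: the supremum of the real parts of its spectrum
(for a positive semidefinite matrix this is the maximal eigenvalue, i.e. the
operator norm). -/
def lamMax {n : ℕ} (M : Matrix (Fin n) (Fin n) ℂ) : ℝ :=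
  sSup (Complex.re '' spectrum ℂ M)

/-!
Write `ψ = |Ψ⟩⟩` and `B(X, Y) = S (|X⟩⟩ ⊗ |Y⟩⟩)`. Since `S` is positive semidefinite and `S ⋆ U` is
supported on the line of `|U̅Ψ⟩⟩`, the bilinear map `B` vanishes at `(X, Y)` as soon as `X ∈ SU(d)`
and `Y ⟂ XΨ`. So `B(X, XW) = 0` on `SU(d)` whenever `W ⟂ Ψ`, and `(X, Y) ↦ B(X, YW)` is then
alternating on all matrices: a quadratic form vanishing on the unitary group vanishes identically,
as one sees by expanding it at the unitaries `u (3/5 + 4/5 i (2p - 1))` with `p` a projection, and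
projections span. If `d > 2` and `X` is a matrix unit, each column carries a nonzero `W ⟂ Ψ` with
`XW = 0`, whence `B(X, YW) = -B(Y, XW) = 0`; as the `YW` exhaust the matrices supported on that
column, `B = 0`, that is, `S = 0`. If `d = 2`, then `U̅ = σ_y U σ_y` on `SU(2)`, so it suffices to
send `σ_y Ψ` through `U` and to apply `σ_y` to the output.
-/

section StarProjections

variable {A W : Type*} [Ring A] [StarRing A] [Algebra ℂ A] [AddCommGroup W] [Module ℂ W]

lemma span_unitary_eq_top_of_span_isStarProjection
    (hspan : Submodule.span ℂ {p : A | IsStarProjection p} = ⊤) :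
    Submodule.span ℂ (unitary A : Set A) = ⊤ := by
  rw [eq_top_iff, ← hspan, Submodule.span_le]
  intro p hp
  have hsum : p = (1 / 2 : ℂ) • ((2 * p - 1) + 1) := by
    rw [sub_add_cancel, two_mul]
    module
  rw [hsum]
  exact Submodule.smul_mem _ _ <| add_mem
    (Submodule.subset_span hp.two_mul_sub_one_mem_unitary) (Submodule.subset_span (one_mem _))

variable [StarModule ℂ A]

lemma smul_one_add_mul_I_smul_mem_unitary {v : A} (hv : v ∈ unitary A) (hsa : IsSelfAdjoint v)
    {a b : ℝ} (hab : a ^ 2 + b ^ 2 = 1) : (a : ℂ) • (1 : A) + (b * Complex.I) • v ∈ unitary A := by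
  have hvv : v * v = 1 := by simpa [hsa.star_eq] using (Unitary.mem_iff.1 hv).1
  have hstar : star ((a : ℂ) • (1 : A) + (b * Complex.I) • v)
      = (a : ℂ) • (1 : A) - (b * Complex.I) • v := by
    simp [star_smul, hsa.star_eq, sub_eq_add_neg]
  have hnorm : (a : ℂ) * a - b * Complex.I * (b * Complex.I) = 1 := by
    have hab' : (a : ℂ) ^ 2 + b ^ 2 = 1 := mod_cast hab
    linear_combination hab' - b ^ 2 * Complex.I_mul_I
  rw [Unitary.mem_iff, hstar]
  constructor <;>
  · simp only [add_mul, sub_mul, mul_add, mul_sub, smul_mul_smul_comm, one_mul, mul_one, hvv]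
    linear_combination (norm := module) congrArg (· • (1 : A)) hnorm

lemma add_swap_eq_zero_of_isStarProjection {Q : A →ₗ[ℂ] A →ₗ[ℂ] W}
    (hQ : ∀ u ∈ unitary A, Q u u = 0) {u p : A} (hu : u ∈ unitary A) (hp : IsStarProjection p) :
    Q u (u * p) + Q (u * p) u = 0 := by
  set v := 2 * p - 1 with hv
  have hvu : v ∈ unitary A := hp.two_mul_sub_one_mem_unitary
  have hsa : IsSelfAdjoint v := by
    simp [hv, isSelfAdjoint_iff, two_mul, hp.isSelfAdjoint.star_eq]
  have hswap : Q u (u * v) + Q (u * v) u = 0 := by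
    have hab : (3 / 5 : ℝ) ^ 2 + (4 / 5) ^ 2 = 1 := by norm_num
    have h := hQ _ (mul_mem hu (smul_one_add_mul_I_smul_mem_unitary hvu hsa hab))
    simp only [mul_add, mul_smul_comm, mul_one, map_add, map_smul, LinearMap.add_apply,
      LinearMap.smul_apply, hQ u hu, hQ _ (mul_mem hu hvu), smul_zero, zero_add, add_zero] at h
    have hc : ((3 / 5 : ℝ) * ((4 / 5 : ℝ) * Complex.I) : ℂ) ≠ 0 := by simp
    refine (smul_eq_zero_iff_right hc).1 ?_
    rw [← h]
    module
  have hp_eq : u * p = (1 / 2 : ℂ) • (u * v + u) := by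
    rw [hv, mul_sub, mul_one, sub_add_cancel, two_mul, mul_add]
    module
  simp only [hp_eq, map_smul, map_add, LinearMap.smul_apply, LinearMap.add_apply, hQ u hu,
    add_zero, ← smul_add, hswap, smul_zero]

theorem isAlt_of_forall_unitary (hspan : Submodule.span ℂ {p : A | IsStarProjection p} = ⊤)
    {Q : A →ₗ[ℂ] A →ₗ[ℂ] W} (hQ : ∀ u ∈ unitary A, Q u u = 0) : Q.IsAlt := by
  have hunitary : ∀ u ∈ unitary A, (Q + Q.flip) u = 0 := by
    intro u hu
    have hproj : (Q + Q.flip) u ∘ₗ LinearMap.mulLeft ℂ u = 0 :=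
      LinearMap.ext_on hspan fun p hp => add_swap_eq_zero_of_isStarProjection hQ hu hp
    ext a
    simpa [← mul_assoc, (Unitary.mem_iff.1 hu).2] using LinearMap.congr_fun hproj (star u * a)
  have hsymm : Q + Q.flip = 0 :=
    LinearMap.ext_on (span_unitary_eq_top_of_span_isStarProjection hspan) hunitary
  intro a
  have h : (2 : ℂ) • Q a a = 0 := by
    simpa [two_smul] using LinearMap.congr_fun₂ hsymm a a
  exact (smul_eq_zero_iff_right two_ne_zero).1 h

end StarProjections

section UnitaryMatrices

variable {n κ W : Type*} [Fintype n] [AddCommGroup W] [Module ℂ W]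

lemma isStarProjection_smul_vecMulVec_star (v : n → ℂ) :
    IsStarProjection ((star v ⬝ᵥ v)⁻¹ • vecMulVec v (star v)) where
  isIdempotentElem := by
    rcases eq_or_ne v 0 with rfl | hv
    · simp [IsIdempotentElem]
    · have hvv : star v ⬝ᵥ v ≠ 0 := dotProduct_star_self_eq_zero.not.2 hv
      simp [IsIdempotentElem, vecMulVec_mul_vecMulVec, smul_smul, vecMulVec_smul, hvv]
  isSelfAdjoint := by
    simp [IsSelfAdjoint, star_eq_conjTranspose, conjTranspose_vecMulVec, ← star_dotProduct v v]

open scoped MatrixOrder Matrix.Norms.L2Operator in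
lemma span_isStarProjection_matrix_eq_top :
    Submodule.span ℂ {P : Matrix n n ℂ | IsStarProjection P} = ⊤ := by
  classical
  rw [eq_top_iff, ← CStarAlgebra.span_nonneg, Submodule.span_le]
  intro M hM
  obtain ⟨k, v, rfl⟩ := posSemidef_iff_eq_sum_vecMulVec.1 (nonneg_iff_posSemidef.1 hM)
  refine Submodule.sum_mem _ fun i _ => ?_
  have hscale : vecMulVec (v i) (star (v i))
      = (star (v i) ⬝ᵥ v i) • (star (v i) ⬝ᵥ v i)⁻¹ • vecMulVec (v i) (star (v i)) := by
    rcases eq_or_ne (v i) 0 with hv | hv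
    · simp [hv]
    · rw [smul_inv_smul₀ (dotProduct_star_self_eq_zero.not.2 hv)]
  rw [hscale]
  exact Submodule.smul_mem _ _ <|
    Submodule.subset_span (isStarProjection_smul_vecMulVec_star (v i))

lemma exists_ne_zero_apply_eq_zero_dotProduct_eq_zero (hn : 2 < Fintype.card n) (j : n)
    (v : n → ℂ) : ∃ w : n → ℂ, w ≠ 0 ∧ w j = 0 ∧ v ⬝ᵥ w = 0 := by
  have hker : LinearMap.ker ((LinearMap.proj j).prod (dotProductBilin ℂ ℂ v)) ≠ ⊥ :=
    LinearMap.ker_ne_bot_of_finrank_lt (by simpa using hn)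
  obtain ⟨w, hw, hw0⟩ := Submodule.exists_mem_ne_zero_of_ne_bot hker
  exact ⟨w, hw0, congrArg Prod.fst hw, congrArg Prod.snd hw⟩

variable [DecidableEq n]

lemma exists_smul_mem_specialUnitaryGroup [Nonempty n] {U : Matrix n n ℂ}
    (hU : U ∈ unitaryGroup n ℂ) : ∃ c : ℂ, c ≠ 0 ∧ c • U ∈ specialUnitaryGroup n ℂ := by
  have hdet : ‖U.det‖ = 1 := CStarRing.norm_of_mem_unitary (det_of_mem_unitary hU)
  have hdet0 : U.det ≠ 0 := norm_ne_zero_iff.1 (by simp [hdet])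
  obtain ⟨c, hc⟩ := IsAlgClosed.exists_pow_nat_eq U.det⁻¹ (Fintype.card_pos (α := n))
  have hcnorm : ‖c‖ = 1 := by
    refine (pow_eq_one_iff_of_nonneg (norm_nonneg c) (Fintype.card_ne_zero (α := n))).1 ?_
    rw [← norm_pow, hc, norm_inv, hdet, inv_one]
  have hcu : c ∈ unitary ℂ := by
    simp [Unitary.mem_iff_star_mul_self, Complex.conj_mul', hcnorm]
  refine ⟨c, norm_ne_zero_iff.1 (by simp [hcnorm]), ?_⟩
  rw [mem_specialUnitaryGroup_iff, det_smul, hc, inv_mul_cancel₀ hdet0]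
  exact ⟨Unitary.smul_mem_of_mem hcu hU, rfl⟩

theorem isAlt_of_forall_specialUnitaryGroup [Nonempty n]
    {Q : Matrix n n ℂ →ₗ[ℂ] Matrix n n ℂ →ₗ[ℂ] W}
    (hQ : ∀ U ∈ specialUnitaryGroup n ℂ, Q U U = 0) : Q.IsAlt := by
  refine isAlt_of_forall_unitary span_isStarProjection_matrix_eq_top fun U hU => ?_
  obtain ⟨c, hc, hcU⟩ := exists_smul_mem_specialUnitaryGroup hU
  simpa [hc] using hQ _ hcU

theorem bilin_eq_zero_of_forall_specialUnitaryGroup [Fintype κ]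
    (hn : 2 < Fintype.card n) {B : Matrix n n ℂ →ₗ[ℂ] Matrix n κ ℂ →ₗ[ℂ] W} (Ψ : Matrix n κ ℂ)
    (hB : ∀ U ∈ specialUnitaryGroup n ℂ, ∀ Y, (Yᴴ * (U * Ψ)).trace = 0 → B U Y = 0) :
    B = 0 := by
  classical
  have : Nonempty n := Fintype.card_pos_iff.1 (by omega)
  have halt (W₀ : Matrix n κ ℂ) (hW₀ : (W₀ᴴ * Ψ).trace = 0) :
      (B.compl₂ (mulRightLinearMap n ℂ W₀)).IsAlt := by
    refine isAlt_of_forall_specialUnitaryGroup fun U hU => hB U hU _ ?_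
    have hUU : Uᴴ * U = 1 := mem_unitaryGroup_iff'.1 hU.1
    rw [mulRightLinearMap_apply, conjTranspose_mul, Matrix.mul_assoc, ← Matrix.mul_assoc Uᴴ, hUU,
      Matrix.one_mul, hW₀]
  have hsingle (i j k : n) (a : κ) : B (single i j 1) (single k a 1) = 0 := by
    obtain ⟨w, hw, hwj, hwΨ⟩ :=
      exists_ne_zero_apply_eq_zero_dotProduct_eq_zero hn j (star fun l => Ψ l a)
    let W₀ : Matrix n κ ℂ := vecMulVec w (Pi.single a 1)
    let Y : Matrix n n ℂ := vecMulVec (Pi.single k 1) ((star w ⬝ᵥ w)⁻¹ • star w)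
    have hXW₀ : single i j (1 : ℂ) * W₀ = 0 := by
      simp [W₀, mul_vecMulVec, single_mulVec, hwj]
    have hYW₀ : Y * W₀ = single k a 1 := by
      simp [Y, W₀, single_eq_single_vecMulVec_single, vecMulVec_mul_vecMulVec, hw]
    have hW₀ : (W₀ᴴ * Ψ).trace = 0 := by
      rw [star_dotProduct, star_eq_zero] at hwΨ
      simpa [W₀, conjTranspose_vecMulVec, vecMulVec_mul, trace_vecMulVec, vecMul] using hwΨ
    have hswap := (halt W₀ hW₀).neg Y (single i j 1)
    simpa [hXW₀, hYW₀] using hswap.symm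
  exact ext_linearMap ℂ fun i j => LinearMap.ext_ring <| ext_linearMap ℂ fun k a =>
    LinearMap.ext_ring (by simpa using hsingle i j k a)

lemma map_star_mem_specialUnitaryGroup {U : Matrix n n ℂ} (hU : U ∈ specialUnitaryGroup n ℂ) :
    U.map star ∈ specialUnitaryGroup n ℂ := by
  refine mem_specialUnitaryGroup_iff.2 ⟨map_star_mem_unitaryGroup_iff.2 hU.1, ?_⟩
  change (Uᵀᴴ).det = 1
  rw [det_conjTranspose, det_transpose, (mem_specialUnitaryGroup_iff.1 hU).2, star_one]

lemma conjTranspose_eq_adjugate_of_mem_specialUnitaryGroup {U : Matrix n n ℂ}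
    (hU : U ∈ specialUnitaryGroup n ℂ) : Uᴴ = U.adjugate := by
  obtain ⟨hunitary, hdet⟩ := mem_specialUnitaryGroup_iff.1 hU
  calc Uᴴ = (U.adjugate * U) * Uᴴ := by rw [adjugate_mul, hdet, one_smul, Matrix.one_mul]
    _ = U.adjugate := by
      rw [Matrix.mul_assoc, ← star_eq_conjTranspose, mem_unitaryGroup_iff.1 hunitary,
        Matrix.mul_one]

end UnitaryMatrices

section OuterProducts

variable {n κ : Type*} [Fintype n]

lemma mul_outer_mul_conjTranspose (M : Matrix κ n ℂ) (v : n → ℂ) :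
    M * outer v * Mᴴ = outer (M *ᵥ v) := by
  rw [outer, outer, mul_vecMulVec, vecMulVec_mul, star_mulVec]

lemma one_kronecker_mul_outer_vec [Fintype κ] [DecidableEq κ] (U : Matrix n n ℂ)
    (Ψ : Matrix n κ ℂ) :
    (1 ⊗ₖ U : Matrix (κ × n) (κ × n) ℂ) * outer (vec Ψ) * (1 ⊗ₖ U)ᴴ = outer (vec (U * Ψ)) := by
  rw [mul_outer_mul_conjTranspose, kronecker_mulVec_vec, transpose_one, Matrix.mul_one]

lemma trace_outer_vec_mul [DecidableEq n] [Fintype κ] {U : Matrix n n ℂ}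
    (hU : U ∈ unitaryGroup n ℂ) (Ψ : Matrix n κ ℂ) :
    (outer (vec (U * Ψ))).trace = (Ψᴴ * Ψ).trace := by
  rw [outer, trace_vecMulVec, dotProduct_comm, star_vec_dotProduct_vec, conjTranspose_mul,
    Matrix.mul_assoc, ← Matrix.mul_assoc Uᴴ, ← star_eq_conjTranspose U,
    mem_unitaryGroup_iff'.1 hU, Matrix.one_mul]

end OuterProducts

section ProductVectors

variable {α β : Type*} [Fintype α] [Fintype β] [DecidableEq β]

lemma ptrLeft_mul_outer_kronecker_one_apply (S : Matrix (α × β) (α × β) ℂ) (x : α → ℂ)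
    (b b' : β) :
    ptrLeft (S * (outer x ⊗ₖ 1)) b b' = ∑ p, ∑ q, S (p, b) (q, b') * (x q * star (x p)) := by
  simp [ptrLeft, outer, mul_apply, Fintype.sum_prod_type, vecMulVec_apply, one_apply]

lemma ptrLeft_outer_mul_outer_kronecker_one (s : α × β → ℂ) (x : α → ℂ) :
    ptrLeft (outer s * (outer x ⊗ₖ 1)) = outer fun b => ∑ q, s (q, b) * star (x q) := by
  ext b b'
  rw [ptrLeft_mul_outer_kronecker_one_apply]
  simp only [outer, vecMulVec_apply, Pi.star_apply, star_sum, star_mul', star_star,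
    Finset.sum_mul_sum]
  exact Finset.sum_congr rfl fun p _ => Finset.sum_congr rfl fun q _ => by ring

lemma star_vec_vecMulVec_dotProduct_mulVec (S : Matrix (α × β) (α × β) ℂ) (x : α → ℂ)
    (y : β → ℂ) :
    star (vec (vecMulVec y x)) ⬝ᵥ S *ᵥ vec (vecMulVec y x)
      = star y ⬝ᵥ ptrLeft (S * (outer x ⊗ₖ 1)) *ᵥ y := by
  simp only [dotProduct, mulVec, ptrLeft_mul_outer_kronecker_one_apply, Fintype.sum_prod_type,
    Pi.star_apply, vec, vecMulVec_apply, Finset.mul_sum, Finset.sum_mul, star_mul']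
  rw [Finset.sum_comm]
  refine Finset.sum_congr rfl fun b _ => ?_
  rw [Finset.sum_comm (s := (Finset.univ : Finset β))]
  refine Finset.sum_congr rfl fun p _ => ?_
  rw [Finset.sum_comm]
  exact Finset.sum_congr rfl fun b' _ => Finset.sum_congr rfl fun q _ => by ring

lemma mulVec_vec_vecMulVec_eq_zero {S : Matrix (α × β) (α × β) ℂ} (hS : S.PosSemidef) {p : ℂ}
    {x : α → ℂ} {y φ : β → ℂ} (hp : ptrLeft (S * (outer x ⊗ₖ 1)) = p • outer φ)
    (hy : star y ⬝ᵥ φ = 0) : S *ᵥ vec (vecMulVec y x) = 0 := by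
  rw [← hS.dotProduct_mulVec_zero_iff, star_vec_vecMulVec_dotProduct_mulVec, hp, outer,
    smul_mulVec, vecMulVec_mulVec]
  simp [hy]

end ProductVectors

section NoGo

variable {n κ : Type*} [Fintype n] [Fintype κ]

/-- The action of `S` on product vectors as the bilinear map `(X, Y) ↦ S (|X⟩⟩ ⊗ |Y⟩⟩)`. Here
`|X⟩⟩` is `vec X`, and `x ⊗ y` is encoded as `vec (vecMulVec y x)` because `vec` stacks columns. -/
def choiMulVec (S : Matrix ((n × n) × (κ × n)) ((n × n) × (κ × n)) ℂ) :
    Matrix n n ℂ →ₗ[ℂ] Matrix n κ ℂ →ₗ[ℂ] ((n × n) × (κ × n) → ℂ) :=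
  LinearMap.mk₂ ℂ (fun X Y => S *ᵥ vec (vecMulVec (vec Y) (vec X)))
    (fun X X' Y => by simp only [vec_add, vecMulVec_add, mulVec_add])
    (fun c X Y => by simp only [vec_smul, vecMulVec_smul, mulVec_smul])
    (fun X Y Y' => by simp only [vec_add, add_vecMulVec, mulVec_add])
    (fun c X Y => by simp only [vec_smul, smul_vecMulVec, mulVec_smul])

lemma choiMulVec_single_single [DecidableEq n] [DecidableEq κ]
    (S : Matrix ((n × n) × (κ × n)) ((n × n) × (κ × n)) ℂ) (i j k : n) (a : κ) :
    choiMulVec S (single i j 1) (single k a 1) = S.col ((j, i), (a, k)) := by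
  simp [choiMulVec, ← single_eq_single_vecMulVec_single]

lemma eq_zero_of_choiMulVec_eq_zero {S : Matrix ((n × n) × (κ × n)) ((n × n) × (κ × n)) ℂ}
    (hS : choiMulVec S = 0) : S = 0 := by
  classical
  ext p ⟨⟨j, i⟩, a, k⟩
  rw [← col_apply S, ← choiMulVec_single_single, hS]
  rfl

theorem eq_zero_of_forall_ptrLeft_eq_smul_outer [DecidableEq n] [DecidableEq κ]
    (hn : 2 < Fintype.card n)
    {S : Matrix ((n × n) × (κ × n)) ((n × n) × (κ × n)) ℂ} (hS : S.PosSemidef)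
    (Ψ : Matrix n κ ℂ) (p : Matrix n n ℂ → ℂ)
    (hp : ∀ U ∈ specialUnitaryGroup n ℂ,
      ptrLeft (S * (outer (vec U) ⊗ₖ 1)) = p U • outer (vec (U * Ψ))) : S = 0 := by
  refine eq_zero_of_choiMulVec_eq_zero <| bilin_eq_zero_of_forall_specialUnitaryGroup hn Ψ ?_
  intro U hU Y hY
  exact mulVec_vec_vecMulVec_eq_zero hS (hp U hU) (by rw [star_vec_dotProduct_vec, hY])

end NoGo

section Protocols

variable {d m : ℕ}

lemma mconj_mconj (U : Matrix (Fin d) (Fin d) ℂ) : mconj (mconj U) = U := by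
  ext i j
  simp [mconj]

theorem eq_zero_of_forall_actB_eq_smul (hd : 2 < d)
    {S : Matrix ((Fin d × Fin d) × (Fin m × Fin d)) ((Fin d × Fin d) × (Fin m × Fin d)) ℂ}
    (hS : S.PosSemidef) (Ψ : Matrix (Fin d) (Fin m) ℂ) (p : Matrix (Fin d) (Fin d) ℂ → ℂ)
    (hp : ∀ U ∈ specialUnitaryGroup (Fin d) ℂ,
      actB S U = p U • outer (vec (mconj U * Ψ))) : S = 0 := by
  refine eq_zero_of_forall_ptrLeft_eq_smul_outer (by simpa using hd) hS Ψ (p ∘ mconj) ?_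
  intro U hU
  have h := hp (mconj U) (map_star_mem_specialUnitaryGroup hU)
  rwa [actB, mconj_mconj] at h

/-- The Choi vector, on `(I × O) × (A × F)`, of the protocol that prepares `|Φ⟩⟩` on `A ⊗ I`, sends
`I` through the unitary and applies `J` to the output. -/
def queryChoi (J : Matrix (Fin d) (Fin d) ℂ) (Φ : Matrix (Fin d) (Fin m) ℂ) :
    (Fin d × Fin d) × (Fin m × Fin d) → ℂ :=
  fun z => J z.2.2 z.1.2 * Φ z.1.1 z.2.1

lemma ptrRight_outer_queryChoi {J : Matrix (Fin d) (Fin d) ℂ} (hJ : J ∈ unitaryGroup (Fin d) ℂ)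
    (Φ : Matrix (Fin d) (Fin m) ℂ) : ptrRight (outer (queryChoi J Φ)) = (Φ * Φᴴ) ⊗ₖ 1 := by
  ext ⟨i, o⟩ ⟨i', o'⟩
  have hcol : ∑ f, star (J f o') * J f o = (1 : Matrix (Fin d) (Fin d) ℂ) o o' := by
    rw [← transpose_one, ← mem_unitaryGroup_iff'.1 hJ]
    rfl
  calc ptrRight (outer (queryChoi J Φ)) (i, o) (i', o')
      = ∑ a, ∑ f, Φ i a * star (Φ i' a) * (star (J f o') * J f o) := by
        simp only [ptrRight, Fintype.sum_prod_type]
        refine Finset.sum_congr rfl fun a _ => Finset.sum_congr rfl fun f _ => ?_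
        simp only [outer, queryChoi, vecMulVec_apply, Pi.star_apply, star_mul']
        ring
    _ = (Φ * Φᴴ) i i' * (1 : Matrix (Fin d) (Fin d) ℂ) o o' := by
        simp only [← Finset.mul_sum, hcol, ← Finset.sum_mul, mul_apply, conjTranspose_apply]

lemma isProtocolB_outer_queryChoi {J : Matrix (Fin d) (Fin d) ℂ}
    (hJ : J ∈ unitaryGroup (Fin d) ℂ) {Φ : Matrix (Fin d) (Fin m) ℂ} (hΦ : (Φ * Φᴴ).trace = 1) :
    IsProtocolB (outer (queryChoi J Φ)) (outer (queryChoi J Φ)) :=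
  ⟨posSemidef_vecMulVec_self_star _, by simpa using PosSemidef.zero, Φ * Φᴴ,
    posSemidef_self_mul_conjTranspose Φ, hΦ, ptrRight_outer_queryChoi hJ Φ⟩

lemma actB_outer_queryChoi (J U : Matrix (Fin d) (Fin d) ℂ) (Φ : Matrix (Fin d) (Fin m) ℂ) :
    actB (outer (queryChoi J Φ)) U = outer (vec (J * U * Φ)) := by
  rw [actB, choiProj, ptrLeft_outer_mul_outer_kronecker_one]
  congr 1
  ext ⟨a, f⟩
  simp only [queryChoi, choiVec, mconj, map_apply, vec, mul_apply, Fintype.sum_prod_type,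
    Finset.sum_mul]
  refine Finset.sum_congr rfl fun i _ => Finset.sum_congr rfl fun o _ => ?_
  rw [starRingEnd_apply, star_star]
  ring

/-- The Pauli matrix `σ_y`, which intertwines the defining representation of `SU(2)` with its
complex conjugate. -/
def pauliY : Matrix (Fin 2) (Fin 2) ℂ :=
  !![0, -Complex.I; Complex.I, 0]

lemma pauliY_conjTranspose : pauliYᴴ = pauliY := by
  ext i j
  fin_cases i <;> fin_cases j <;> simp [pauliY]

lemma pauliY_mul_self : pauliY * pauliY = 1 := by
  simp [pauliY, one_fin_two]

lemma pauliY_mem_unitaryGroup : pauliY ∈ unitaryGroup (Fin 2) ℂ := by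
  rw [mem_unitaryGroup_iff, star_eq_conjTranspose, pauliY_conjTranspose, pauliY_mul_self]

lemma mconj_eq_pauliY_mul_mul_pauliY {U : Matrix (Fin 2) (Fin 2) ℂ}
    (hU : U ∈ specialUnitaryGroup (Fin 2) ℂ) : mconj U = pauliY * U * pauliY := by
  calc mconj U = U.adjugateᵀ := by
        rw [← conjTranspose_eq_adjugate_of_mem_specialUnitaryGroup hU]
        rfl
    _ = pauliY * U * pauliY := by
        rw [adjugate_fin_two, eta_fin_two U]
        ext i j
        fin_cases i <;> fin_cases j <;> simp [pauliY, mul_right_comm _ _ Complex.I]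

end Protocols

theorem bipartite_conjugation_single_call_general (d m : ℕ) (ψ : Fin m × Fin d → ℂ)
    (hψ : star ψ ⬝ᵥ ψ = 1) :
    (2 < d →
      ∀ (S : Matrix ((Fin d × Fin d) × (Fin m × Fin d)) ((Fin d × Fin d) × (Fin m × Fin d)) ℂ)
        (p : Matrix (Fin d) (Fin d) ℂ → ℂ), S.PosSemidef →
        (∀ U ∈ specialUnitaryGroup (Fin d) ℂ, actB S U = p U •
          ((1 : Matrix (Fin m) (Fin m) ℂ) ⊗ₖ mconj U * outer ψ *
            ((1 : Matrix (Fin m) (Fin m) ℂ) ⊗ₖ mconj U)ᴴ)) →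
        ∀ U ∈ specialUnitaryGroup (Fin d) ℂ, p U = 0) ∧
    (d = 2 →
      ∃ S : Matrix ((Fin d × Fin d) × (Fin m × Fin d)) ((Fin d × Fin d) × (Fin m × Fin d)) ℂ,
        IsProtocolB S S ∧
        ∀ U ∈ specialUnitaryGroup (Fin d) ℂ, actB S U =
          (1 : Matrix (Fin m) (Fin m) ℂ) ⊗ₖ mconj U * outer ψ *
            ((1 : Matrix (Fin m) (Fin m) ℂ) ⊗ₖ mconj U)ᴴ) := by
  obtain ⟨Ψ, rfl⟩ := vec_bijective.surjective ψ
  rw [star_vec_dotProduct_vec] at hψ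
  simp only [one_kronecker_mul_outer_vec]
  constructor
  · intro hd S p hS hp U hU
    have hmconj : mconj U ∈ specialUnitaryGroup (Fin d) ℂ := map_star_mem_specialUnitaryGroup hU
    have htrace := congrArg trace (hp U hU)
    rw [eq_zero_of_forall_actB_eq_smul hd hS Ψ p hp, trace_smul,
      trace_outer_vec_mul hmconj.1, hψ, actB] at htrace
    simpa [ptrLeft, trace] using htrace.symm
  · rintro rfl
    refine ⟨outer (queryChoi pauliY (pauliY * Ψ)),
      isProtocolB_outer_queryChoi pauliY_mem_unitaryGroup ?_, fun U hU => ?_⟩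
    · rw [trace_mul_comm, conjTranspose_mul, Matrix.mul_assoc, ← Matrix.mul_assoc pauliYᴴ,
        pauliY_conjTranspose, pauliY_mul_self, Matrix.one_mul, hψ]
    · rw [actB_outer_queryChoi, mconj_eq_pauliY_mul_mul_pauliY hU, Matrix.mul_assoc _ pauliY]

/-- **Probabilistic exact unitary complex conjugation on part of a known bipartite
pure state, single call.** For `d > 2` every protocol implementing
`U ↦ p · (1_m ⊗ U̅)|ψ⟩⟨ψ|(1_m ⊗ U̅)†` for all `U ∈ SU(d)` has `p = 0`;
for `d = 2` there is such a protocol with `p = 1`. -/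
theorem bipartite_conjugation_single_call
    (d m : ℕ) (hd : 2 ≤ d) (hm : 1 ≤ m)
    (ψ : Fin m × Fin d → ℂ) (hψ : star ψ ⬝ᵥ ψ = 1) :
    (2 < d →
      ∀ (S Sch : Matrix ((Fin d × Fin d) × (Fin m × Fin d))
          ((Fin d × Fin d) × (Fin m × Fin d)) ℂ) (p : ℝ),
        IsProtocolB S Sch →
        (∀ U : Matrix (Fin d) (Fin d) ℂ, U ∈ Matrix.specialUnitaryGroup (Fin d) ℂ →
          actB S U = (p : ℂ) •
            (((1 : Matrix (Fin m) (Fin m) ℂ) ⊗ₖ mconj U) * outer ψ *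
              ((1 : Matrix (Fin m) (Fin m) ℂ) ⊗ₖ mconj U)ᴴ)) →
        p = 0) ∧
    (d = 2 →
      ∃ S Sch : Matrix ((Fin d × Fin d) × (Fin m × Fin d))
          ((Fin d × Fin d) × (Fin m × Fin d)) ℂ,
        IsProtocolB S Sch ∧
        ∀ U : Matrix (Fin d) (Fin d) ℂ, U ∈ Matrix.specialUnitaryGroup (Fin d) ℂ →
          actB S U = ((1 : ℝ) : ℂ) •
            (((1 : Matrix (Fin m) (Fin m) ℂ) ⊗ₖ mconj U) * outer ψ *
              ((1 : Matrix (Fin m) (Fin m) ℂ) ⊗ₖ mconj U)ᴴ)) := by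
  obtain ⟨hnogo, hexists⟩ := bipartite_conjugation_single_call_general d m ψ hψ
  refine ⟨fun hd S _ p hS hp => ?_, fun hd => ?_⟩
  · simpa using hnogo hd S (fun _ => p) hS.1 hp 1 (one_mem _)
  · obtain ⟨S, hS, hSU⟩ := hexists hd
    exact ⟨S, S, hS, by simpa using hSU⟩
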